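/- Let f ∈ ℝ^E satisfy u⁻_e < f_e < u⁺_e for all e, and let f̄ ∈ ℝ^E satisfy ‖L(f)(f − f̄)‖_∞ ≤ ε for some ε ∈ (0, 1/100]. Then u⁻_e < f̄_e < u⁺_e for all e, and ℓ(f)_e ≈_{1+3ε} ℓ(f̄)_e for every e ∈ E. -/

import Mathlib

open Finset

noncomputable section

/-- The barrier parameter `α = 1/(1000 log (m U))`. -/
def fAlpha (m : ℕ) (U : ℝ) : ℝ := 1 / (1000 * Real.log (m * U))

/-- The length `ℓ(f)_e = (u⁺_e - f_e)^{-1-α} + (f_e - u⁻_e)^{-1-α}`. -/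
def flen {E : Type} (m : ℕ) (U : ℝ) (lo hi f : E → ℝ) (e : E) : ℝ :=
  (hi e - f e) ^ (-1 - fAlpha m U) + (f e - lo e) ^ (-1 - fAlpha m U)

/-!
Each of the two summands of the length bounds the displacement: if `x` is the distance from `f e`
to one of the capacities, then `x ^ (-1 - α) * |f e - fb e| ≤ ε` says that the relative
displacement `|f e - fb e| / x` is at most `x ^ α * ε`. The parameter `α` is chosen so that
`x ^ α ≤ (m * U) ^ α = exp (1 / 1000)`, so this is essentially `ε`. Hence the distance stays
positive, and by Bernoulli's inequality its power `-1 - α` changes by a factor of at most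
`1 / (1 - (1 + α) * x ^ α * ε)`.
-/

/-- The relation `x ≈_β y`: the numbers `x` and `y` agree up to the factor `β`. It is only
meant for `0 < β` and nonnegative `x` and `y`. -/
def MulApprox (β x y : ℝ) : Prop := β⁻¹ * y ≤ x ∧ x ≤ β * y

namespace MulApprox

variable {β x y : ℝ}

theorem mono {γ : ℝ} (h : MulApprox β x y) (hβ : 0 < β) (hβγ : β ≤ γ) (hy : 0 ≤ y) :
    MulApprox γ x y :=
  ⟨(mul_le_mul_of_nonneg_right (inv_anti₀ hβ hβγ) hy).trans h.1,
    h.2.trans (mul_le_mul_of_nonneg_right hβγ hy)⟩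

theorem add {x' y' : ℝ} (h : MulApprox β x y) (h' : MulApprox β x' y') :
    MulApprox β (x + x') (y + y') :=
  ⟨(mul_add _ _ _).trans_le (add_le_add h.1 h'.1),
    (add_le_add h.2 h'.2).trans_eq (mul_add _ _ _).symm⟩

theorem rpow_of_nonpos {p : ℝ} (h : MulApprox β x y) (hβ : 0 < β) (hx : 0 < x) (hy : 0 < y)
    (hp : p ≤ 0) : MulApprox (β ^ (-p)) (x ^ p) (y ^ p) := by
  constructor
  · calc (β ^ (-p))⁻¹ * y ^ p = (β * y) ^ p := by
          rw [Real.rpow_neg hβ.le, inv_inv, Real.mul_rpow hβ.le hy.le]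
      _ ≤ x ^ p := Real.rpow_le_rpow_of_nonpos hx h.2 hp
  · calc x ^ p ≤ (β⁻¹ * y) ^ p := Real.rpow_le_rpow_of_nonpos (by positivity) h.1 hp
      _ = β ^ (-p) * y ^ p := by
          rw [Real.mul_rpow (inv_nonneg.2 hβ.le) hy.le, Real.inv_rpow hβ.le, Real.rpow_neg hβ.le]

end MulApprox

section RelativeError

variable {δ x y : ℝ}

theorem pos_of_abs_sub_le_mul (hx : 0 < x) (hδ : δ < 1) (h : |x - y| ≤ δ * x) : 0 < y := by
  have : δ * x < x := mul_lt_of_lt_one_left hx hδ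
  linarith [le_abs_self (x - y)]

theorem mulApprox_of_abs_sub_le_mul (hx : 0 ≤ x) (hδ : δ < 1) (h : |x - y| ≤ δ * x) :
    MulApprox (1 - δ)⁻¹ x y := by
  obtain ⟨hlower, hupper⟩ := abs_le.1 h
  have hδ' : 0 < 1 - δ := sub_pos.2 hδ
  constructor
  · calc (1 - δ)⁻¹⁻¹ * y ≤ (1 - δ) * ((1 + δ) * x) := by
          rw [inv_inv]; gcongr; linarith
      _ = x - δ ^ 2 * x := by ring
      _ ≤ x := sub_le_self _ (by positivity)
  · rw [le_inv_mul_iff₀ hδ']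
    linarith

theorem inv_one_sub_rpow_le_inv_one_sub_mul {p : ℝ} (hp : 1 ≤ p) (hδ : p * δ < 1) :
    (1 - δ)⁻¹ ^ p ≤ (1 - p * δ)⁻¹ := by
  have hδ' : δ < 1 := by nlinarith
  have bernoulli : 1 + p * -δ ≤ (1 + -δ) ^ p :=
    one_add_mul_self_le_rpow_one_add (by linarith) hp
  rw [Real.inv_rpow (by linarith)]
  exact inv_anti₀ (by linarith) (by simpa only [sub_eq_add_neg, mul_neg] using bernoulli)

end RelativeError

section Barrier

variable {α ε κ x y lo hi : ℝ}

theorem abs_sub_le_of_rpow_mul_abs_sub_le (hx : 0 < x) (h : x ^ (-1 - α) * |x - y| ≤ ε) :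
    |x - y| ≤ x ^ α * ε * x := by
  have hcancel : x ^ α * x * x ^ (-1 - α) = 1 := by
    rw [← Real.rpow_add_one hx.ne', ← Real.rpow_add hx, show α + 1 + (-1 - α) = 0 by ring,
      Real.rpow_zero]
  calc |x - y| = x ^ α * x * (x ^ (-1 - α) * |x - y|) := by rw [← mul_assoc, hcancel, one_mul]
    _ ≤ x ^ α * x * ε := by gcongr
    _ = x ^ α * ε * x := by ring

theorem pos_and_mulApprox_rpow_of_rpow_mul_abs_sub_le (hα : 0 ≤ α) (hx : 0 < x)
    (hκ : (1 + α) * x ^ α ≤ κ) (hκε : κ * ε < 1) (h : x ^ (-1 - α) * |x - y| ≤ ε) :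
    0 < y ∧ MulApprox (1 - κ * ε)⁻¹ (x ^ (-1 - α)) (y ^ (-1 - α)) := by
  have hε : 0 ≤ ε := le_trans (by positivity) h
  have hδκ : (1 + α) * (x ^ α * ε) ≤ κ * ε := by
    rw [← mul_assoc]
    gcongr
  have hδ : x ^ α * ε < 1 :=
    (le_mul_of_one_le_left (by positivity) (by linarith)).trans_lt (hδκ.trans_lt hκε)
  have hdist := abs_sub_le_of_rpow_mul_abs_sub_le hx h
  have hy : 0 < y := pos_of_abs_sub_le_mul hx hδ hdist
  have hβ : 0 < (1 - x ^ α * ε)⁻¹ := inv_pos.2 (sub_pos.2 hδ)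
  refine ⟨hy, ((mulApprox_of_abs_sub_le_mul hx.le hδ hdist).rpow_of_nonpos hβ hx hy
    (by linarith)).mono (by positivity) ?_ (by positivity)⟩
  calc (1 - x ^ α * ε)⁻¹ ^ (-(-1 - α)) = (1 - x ^ α * ε)⁻¹ ^ (1 + α) := by ring_nf
    _ ≤ (1 - (1 + α) * (x ^ α * ε))⁻¹ :=
      inv_one_sub_rpow_le_inv_one_sub_mul (by linarith) (by linarith)
    _ ≤ (1 - κ * ε)⁻¹ := inv_anti₀ (by linarith) (by linarith)

/-- The length of a single edge with capacities `lo < hi` and flow value `x`, for an arbitrary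
barrier parameter `α`; thus `flen m U lo hi f e` is
`barrierLength (fAlpha m U) (lo e) (hi e) (f e)`. -/
def barrierLength (α lo hi x : ℝ) : ℝ := (hi - x) ^ (-1 - α) + (x - lo) ^ (-1 - α)

theorem barrierLength_stable (hα : 0 ≤ α) (hκ : (1 + α) * (hi - lo) ^ α ≤ κ) (hκε : κ * ε < 1)
    (hx : lo < x ∧ x < hi) (h : |barrierLength α lo hi x * (x - y)| ≤ ε) :
    (lo < y ∧ y < hi) ∧
      MulApprox (1 - κ * ε)⁻¹ (barrierLength α lo hi x) (barrierLength α lo hi y) := by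
  have hupper : 0 < hi - x := sub_pos.2 hx.2
  have hlower : 0 < x - lo := sub_pos.2 hx.1
  have hκ_of_le {t : ℝ} (ht : 0 < t) (hle : t ≤ hi - lo) : (1 + α) * t ^ α ≤ κ :=
    le_trans (by gcongr) hκ
  have hsum : (hi - x) ^ (-1 - α) * |x - y| + (x - lo) ^ (-1 - α) * |x - y| ≤ ε := by
    rwa [barrierLength, abs_mul, abs_of_pos (by positivity), add_mul] at h
  obtain ⟨hy_hi, happrox_hi⟩ := pos_and_mulApprox_rpow_of_rpow_mul_abs_sub_le (y := hi - y)
    hα hupper (hκ_of_le hupper (by linarith)) hκε <| by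
      rw [sub_sub_sub_cancel_left, abs_sub_comm]
      exact (le_add_of_nonneg_right (by positivity)).trans hsum
  obtain ⟨hy_lo, happrox_lo⟩ := pos_and_mulApprox_rpow_of_rpow_mul_abs_sub_le (y := y - lo)
    hα hlower (hκ_of_le hlower (by linarith)) hκε <| by
      rw [sub_sub_sub_cancel_right]
      exact (le_add_of_nonneg_left (by positivity)).trans hsum
  exact ⟨⟨sub_pos.1 hy_lo, sub_pos.1 hy_hi⟩, happrox_hi.add happrox_lo⟩

end Barrier

section BarrierParameter

variable {m : ℕ} {U : ℝ}

theorem fAlpha_nonneg (hmU : 1 ≤ m * U) : 0 ≤ fAlpha m U :=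
  one_div_nonneg.2 (mul_nonneg (by norm_num) (Real.log_nonneg hmU))

theorem fAlpha_le (hmU : 2 ≤ m * U) : fAlpha m U ≤ 1 / 500 := by
  have hlog : Real.log 2 ≤ Real.log (m * U) := Real.log_le_log two_pos hmU
  have hlog_two : 1 / 2 ≤ Real.log 2 := by linarith [Real.log_two_gt_d9]
  exact one_div_le_one_div_of_le (by norm_num) (by linarith)

theorem rpow_fAlpha (hmU : 1 < m * U) : (m * U) ^ fAlpha m U = Real.exp (1 / 1000) := by
  have hlog : 0 < Real.log (m * U) := Real.log_pos hmU
  rw [Real.rpow_def_of_pos (by linarith), fAlpha]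
  congr 1
  field_simp

theorem one_add_fAlpha_mul_rpow_le {w : ℝ} (hmU : 2 ≤ m * U) (hw : 0 ≤ w) (hwU : w ≤ m * U) :
    (1 + fAlpha m U) * w ^ fAlpha m U ≤ 3 / 2 := by
  have hα : 0 ≤ fAlpha m U := fAlpha_nonneg (by linarith)
  have hexp : Real.exp (1 / 1000) ≤ 1 / (1 - 1 / 1000) :=
    Real.exp_bound_div_one_sub_of_interval (by norm_num) (by norm_num)
  calc (1 + fAlpha m U) * w ^ fAlpha m U
      ≤ (1 + fAlpha m U) * (m * U) ^ fAlpha m U := by gcongr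
    _ = (1 + fAlpha m U) * Real.exp (1 / 1000) := by rw [rpow_fAlpha (by linarith)]
    _ ≤ (1 + 1 / 500) * (1 / (1 - 1 / 1000)) := by gcongr; exact fAlpha_le hmU
    _ ≤ 3 / 2 := by norm_num

end BarrierParameter

theorem stmt6_general {E : Type} {m : ℕ} {U ε : ℝ} {lo hi f fb : E → ℝ} (hmU : 2 ≤ m * U)
    (hcap : ∀ e, hi e - lo e ≤ m * U) (hfs : ∀ e, lo e < f e ∧ f e < hi e) (hε : ε ≤ 1 / 3)
    (hclose : ∀ e, |flen m U lo hi f e * (f e - fb e)| ≤ ε) :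
    (∀ e, lo e < fb e ∧ fb e < hi e) ∧
      ∀ e, MulApprox (1 + 3 * ε) (flen m U lo hi f e) (flen m U lo hi fb e) := by
  refine forall_and.1 fun e ↦ ?_
  have hκ : (1 + fAlpha m U) * (hi e - lo e) ^ fAlpha m U ≤ 3 / 2 :=
    one_add_fAlpha_mul_rpow_le hmU (by linarith [hfs e]) (hcap e)
  have hε₀ : 0 ≤ ε := (abs_nonneg _).trans (hclose e)
  obtain ⟨hstrict, happrox⟩ := barrierLength_stable (fAlpha_nonneg (by linarith)) hκ
    (by linarith) (hfs e) (hclose e)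
  have hlen : 0 ≤ flen m U lo hi fb e :=
    add_nonneg (Real.rpow_nonneg (by linarith) _) (Real.rpow_nonneg (by linarith) _)
  have hfactor : (1 - 3 / 2 * ε)⁻¹ ≤ 1 + 3 * ε := by
    rw [inv_le_iff_one_le_mul₀ (by linarith)]
    calc 1 ≤ 1 + 3 / 2 * ε * (1 - 3 * ε) :=
          le_add_of_nonneg_right (mul_nonneg (by linarith) (by linarith))
      _ = (1 + 3 * ε) * (1 - 3 / 2 * ε) := by ring
  exact ⟨hstrict, happrox.mono (inv_pos.2 (by linarith)) hfactor hlen⟩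

/-- length stability: if `‖L(f)(f - f̄)‖_∞ ≤ ε ≤ 1/100` then `f̄` also
lies strictly within capacities and `ℓ(f) ≈_{1+3ε} ℓ(f̄)` entrywise. -/
theorem stmt6
    {E : Type} [Fintype E]
    (m : ℕ) (hmcard : m = Fintype.card E) (hm : 2 ≤ m)
    (U : ℝ) (hU : 2 ≤ U)
    (lo hi : E → ℝ)
    (hcap : ∀ e, -U ≤ lo e ∧ lo e < hi e ∧ hi e ≤ U)
    (f fb : E → ℝ)
    (hfs : ∀ e, lo e < f e ∧ f e < hi e)
    (ε : ℝ) (hε : 0 < ε ∧ ε ≤ 1 / 100)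
    (hclose : ∀ e, |flen m U lo hi f e * (f e - fb e)| ≤ ε) :
    (∀ e, lo e < fb e ∧ fb e < hi e) ∧
      ∀ e, (1 + 3 * ε)⁻¹ * flen m U lo hi fb e ≤ flen m U lo hi f e ∧
        flen m U lo hi f e ≤ (1 + 3 * ε) * flen m U lo hi fb e := by
  have hwidth : 2 * U ≤ m * U := by gcongr; exact_mod_cast hm
  exact stmt6_general (by linarith) (fun e ↦ by linarith [hcap e]) hfs (by linarith) hclose
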